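/- arXiv:2210.14664 — 9 statements merged into one kernel-verified Lean document; each statement's English description precedes it below -/
import Mathlib

section
/- Let X' ∈ ℝ^{n×(d+1)} be a matrix of full column rank, with smallest singular value σ_min(X') > 0 and largest singular value σ_max(X'). Suppose the columns of X' are partitioned into T consecutive blocks M_1, …, M_T (each of full column rank), and for each j let U_j be a matrix whose columns form an orthonormal basis of the column space of M_j. Let U = [U_1, …, U_T] be the horizontal concatenation. Then for every vector w ∈ ℝ^{d+1}, ‖U w‖₂ ≥ (σ_min(X')/σ_max(X')) · ‖w‖₂; equivalently, the smallest singular value of U is at least σ_min(X')/σ_max(X'). -/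
/-- Euclidean norm of a finitely-indexed real vector. -/
noncomputable def euclNorm {ι : Type*} [Fintype ι] (v : ι → ℝ) : ℝ :=
  Real.sqrt (∑ i, v i ^ 2)

/-- If `X'` has smallest singular value `σmin > 0` and largest singular value
`σmax`, its columns are partitioned into `T` blocks, and `U` is the horizontal concatenation
of orthonormal bases `U_j` of the column spaces of the blocks, then
`‖U w‖₂ ≥ (σmin/σmax) ‖w‖₂` for all `w`. -/
theorem smallest_singular_value_of_concatenated_bases
    (n T : ℕ) (dj : Fin T → ℕ)
    (X' U : Matrix (Fin n) ((j : Fin T) × Fin (dj j)) ℝ)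
    (σmin σmax : ℝ) (hσmin : 0 < σmin)
    (hmin : ∀ v : ((j : Fin T) × Fin (dj j)) → ℝ,
      σmin * euclNorm v ≤ euclNorm (X'.mulVec v))
    (hmax : ∀ v : ((j : Fin T) × Fin (dj j)) → ℝ,
      euclNorm (X'.mulVec v) ≤ σmax * euclNorm v)
    -- each `U_j` has orthonormal columns
    (horth : ∀ (j : Fin T) (c c' : Fin (dj j)),
      (∑ i, U i ⟨j, c⟩ * U i ⟨j, c'⟩) = if c = c' then 1 else 0)
    -- the columns of `U_j` form a basis of the column space of the `j`-th block of `X'`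
    (hspan : ∀ j : Fin T,
      Submodule.span ℝ (Set.range fun c : Fin (dj j) => fun i => U i ⟨j, c⟩) =
      Submodule.span ℝ (Set.range fun c : Fin (dj j) => fun i => X' i ⟨j, c⟩)) :
    ∀ w : ((j : Fin T) × Fin (dj j)) → ℝ,
      (σmin / σmax) * euclNorm w ≤ euclNorm (U.mulVec w) := by
  intro w
  have hnn : ∀ {ι : Type} [Fintype ι] (v : ι → ℝ), 0 ≤ euclNorm v := fun v => Real.sqrt_nonneg _
  have hsq : ∀ {ι : Type} [Fintype ι] (v : ι → ℝ), euclNorm v ^ 2 = ∑ i, v i ^ 2 :=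
    fun v => Real.sq_sqrt (Finset.sum_nonneg fun i _ => sq_nonneg _)
  rcases (hnn w).eq_or_lt with h0 | hpos
  · rw [← h0, mul_zero]; exact hnn _
  have hσmax : 0 < σmax := by
    have h1 := (hmin w).trans (hmax w)
    have := le_of_mul_le_mul_right h1 hpos
    linarith
  have hex : ∀ j : Fin T, ∃ a : Fin (dj j) → ℝ,
      ∀ i, ∑ c, a c * X' i ⟨j, c⟩ = ∑ c, w ⟨j, c⟩ * U i ⟨j, c⟩ := by
    intro j
    have hmem : (∑ c, w ⟨j, c⟩ • (fun i => U i ⟨j, c⟩)) ∈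
        Submodule.span ℝ (Set.range fun c : Fin (dj j) => fun i => X' i ⟨j, c⟩) := by
      rw [← hspan j]
      exact Submodule.sum_mem _ fun c _ =>
        Submodule.smul_mem _ _ (Submodule.subset_span ⟨c, rfl⟩)
    obtain ⟨a, ha⟩ := (Submodule.mem_span_range_iff_exists_fun ℝ).1 hmem
    refine ⟨a, fun i => ?_⟩
    have := congrFun ha i
    simpa [Finset.sum_apply] using this
  choose a ha using hex
  let v : ((j : Fin T) × Fin (dj j)) → ℝ := fun p => a p.1 p.2
  have hUX : U.mulVec w = X'.mulVec v := by
    funext i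
    simp only [Matrix.mulVec, dotProduct, Fintype.sum_sigma]
    refine Finset.sum_congr rfl fun j _ => ?_
    have := ha j i
    simp only [mul_comm (U i _), mul_comm (X' i _)]
    exact this.symm
  have hw : ∀ j, ∑ c, w ⟨j, c⟩ ^ 2 = ∑ i, (∑ c, w ⟨j, c⟩ * U i ⟨j, c⟩) ^ 2 := by
    intro j
    have : ∀ i, (∑ c, w ⟨j, c⟩ * U i ⟨j, c⟩) ^ 2 =
        ∑ c, ∑ c', w ⟨j, c⟩ * w ⟨j, c'⟩ * (U i ⟨j, c⟩ * U i ⟨j, c'⟩) := by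
      intro i
      rw [sq, Finset.sum_mul_sum]
      exact Finset.sum_congr rfl fun c _ => Finset.sum_congr rfl fun c' _ => by ring
    simp only [this]
    rw [Finset.sum_comm]
    refine Finset.sum_congr rfl fun c _ => ?_
    rw [Finset.sum_comm]
    simp only [← Finset.mul_sum, horth]
    simp [sq]
  have hblock : ∀ j, ∑ c, w ⟨j, c⟩ ^ 2 ≤ σmax ^ 2 * ∑ c, a j c ^ 2 := by
    intro j
    let z : ((j : Fin T) × Fin (dj j)) → ℝ := fun p => if p.1 = j then v p else 0
    have h1 : ∀ i, X'.mulVec z i = ∑ c, w ⟨j, c⟩ * U i ⟨j, c⟩ := by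
      intro i
      rw [← ha j i]
      simp only [Matrix.mulVec, dotProduct, Fintype.sum_sigma]
      rw [Finset.sum_eq_single j]
      · simp [z, v, mul_comm]
      · intro b _ hb; simp [z, hb]
      · simp
    have h2 : ∑ p, z p ^ 2 = ∑ c, a j c ^ 2 := by
      rw [Fintype.sum_sigma, Finset.sum_eq_single j]
      · simp [z, v]
      · intro b _ hb; simp [z, hb]
      · simp
    have h3 := pow_le_pow_left₀ (hnn _) (hmax z) 2
    rw [mul_pow, hsq, hsq, h2] at h3
    simp only [h1] at h3
    rw [hw j]; exact h3
  have hwv : euclNorm w ≤ σmax * euclNorm v := by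
    refine (sq_le_sq₀ (hnn _) (mul_nonneg hσmax.le (hnn _))).1 ?_
    rw [mul_pow, hsq, hsq, Fintype.sum_sigma, Fintype.sum_sigma, Finset.mul_sum]
    exact Finset.sum_le_sum fun j _ => hblock j
  rw [hUX]
  refine le_trans ?_ (hmin v)
  rw [div_mul_eq_mul_div, div_le_iff₀ hσmax]
  nlinarith [mul_le_mul_of_nonneg_left hwv hσmin.le]
end

section
/- Let ξ be a random vector in ℝ^m whose coordinates are independent and each distributed as a centered Gaussian N(0, σ²), and let μ ∈ ℝ^m be any fixed vector. Then for every t ≥ 0, Pr( ‖μ + ξ‖₂² ≥ t ) ≥ Pr( ‖ξ‖₂² ≥ t ). That is, the noncentral chi-square random variable ‖μ + ξ‖₂² stochastically dominates the central one ‖ξ‖₂². -/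
open MeasureTheory ProbabilityTheory

lemma aux_one_dim (v : NNReal) (hv : v ≠ 0) (a s : ℝ) :
    gaussianReal 0 v {x : ℝ | s ≤ x ^ 2} ≤ gaussianReal 0 v {x : ℝ | s ≤ (a + x) ^ 2} := by
  rcases le_or_gt s 0 with hs | hs
  · have : {x : ℝ | s ≤ (a + x) ^ 2} = Set.univ := by
      ext x; simp only [Set.mem_setOf_eq, Set.mem_univ, iff_true]; nlinarith [sq_nonneg (a + x)]
    rw [this]; exact measure_mono (Set.subset_univ _)
  obtain ⟨r, hr, rfl⟩ : ∃ r : ℝ, 0 < r ∧ s = r ^ 2 :=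
    ⟨√s, Real.sqrt_pos.2 hs, (Real.sq_sqrt hs.le).symm⟩
  set A : Set ℝ := Set.Ioo (-r) r with hA
  set B : Set ℝ := Set.Ioo (-a - r) (-a + r) with hB
  have mA : MeasurableSet A := measurableSet_Ioo
  have mB : MeasurableSet B := measurableSet_Ioo
  have memA : ∀ x, x ∈ A ↔ x ^ 2 < r ^ 2 := fun x => by
    rw [sq_lt_sq, abs_of_pos hr, abs_lt]; rfl
  have memB : ∀ x, x ∈ B ↔ (a + x) ^ 2 < r ^ 2 := fun x => by
    rw [sq_lt_sq, abs_of_pos hr, abs_lt, hB, Set.mem_Ioo]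
    constructor <;> rintro ⟨h1, h2⟩ <;> constructor <;> linarith
  have e1 : {x : ℝ | r ^ 2 ≤ x ^ 2} = Aᶜ := by
    ext x; rw [Set.mem_compl_iff, memA, not_lt]; rfl
  have e2 : {x : ℝ | r ^ 2 ≤ (a + x) ^ 2} = Bᶜ := by
    ext x; rw [Set.mem_compl_iff, memB, not_lt]; rfl
  rw [e1, e2, prob_compl_eq_one_sub mA, prob_compl_eq_one_sub mB]
  apply tsub_le_tsub_left
  have hvol : volume (B \ A) = volume (A \ B) := by
    have h1 := measure_inter_add_diff (μ := volume) A mB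
    have h2 := measure_inter_add_diff (μ := volume) B mA
    have h3 : volume A = volume B := by
      rw [hA, hB, Real.volume_Ioo, Real.volume_Ioo]; congr 1; ring
    rw [Set.inter_comm, ← h3, ← h1] at h2
    refine (ENNReal.add_right_inj ?_).1 h2
    exact ne_top_of_le_ne_top (by rw [hA, Real.volume_Ioo]; exact ENNReal.ofReal_ne_top)
      (measure_mono Set.inter_subset_left)
  have hmono : ∀ x y : ℝ, x ^ 2 ≤ y ^ 2 → gaussianPDF 0 v y ≤ gaussianPDF 0 v x := by
    intro x y h
    unfold gaussianPDF gaussianPDFReal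
    apply ENNReal.ofReal_le_ofReal
    simp only [sub_zero]
    gcongr
  have key : gaussianReal 0 v (B \ A) ≤ gaussianReal 0 v (A \ B) := by
    rw [gaussianReal_apply _ hv, gaussianReal_apply _ hv]
    calc _ ≤ ∫⁻ x in B \ A, gaussianPDF 0 v r := by
          refine setLIntegral_mono' (mB.diff mA) fun x hx => hmono _ _ ?_
          exact not_lt.1 fun h => hx.2 ((memA x).2 h)
      _ = ∫⁻ x in A \ B, gaussianPDF 0 v r := by
          rw [setLIntegral_const, setLIntegral_const, hvol]
      _ ≤ _ := by
          refine setLIntegral_mono' (mA.diff mB) fun x hx => hmono _ _ ?_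
          exact ((memA x).1 hx.1).le
  rw [← measure_inter_add_diff (μ := gaussianReal 0 v) A mB,
    ← measure_inter_add_diff (μ := gaussianReal 0 v) B mA, Set.inter_comm]
  gcongr

lemma aux_multi (γ : Measure ℝ) [IsProbabilityMeasure γ]
    (h : ∀ a s : ℝ, γ {x : ℝ | s ≤ x ^ 2} ≤ γ {x : ℝ | s ≤ (a + x) ^ 2})
    (m : ℕ) : ∀ (μ : Fin m → ℝ) (t : ℝ),
    (Measure.pi fun _ : Fin m => γ) {x : Fin m → ℝ | t ≤ ∑ i, x i ^ 2}
      ≤ (Measure.pi fun _ : Fin m => γ) {x : Fin m → ℝ | t ≤ ∑ i, (μ i + x i) ^ 2} := by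
  induction m with
  | zero => intro μ t; simp
  | succ m ih =>
    intro μ t
    have mp := measurePreserving_piFinSuccAbove (fun _ : Fin (m + 1) => γ) 0
    have red : ∀ ν : Fin (m + 1) → ℝ,
        (Measure.pi fun _ : Fin (m + 1) => γ) {x | t ≤ ∑ i, (ν i + x i) ^ 2}
        = (γ.prod (Measure.pi fun _ : Fin m => γ))
          {p | t ≤ (ν 0 + p.1) ^ 2 + ∑ i : Fin m, (ν i.succ + p.2 i) ^ 2} := by
      intro ν
      rw [← mp.measure_preimage
        (measurableSet_le (by fun_prop) (by fun_prop)).nullMeasurableSet]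
      congr 1
      ext x
      simp [Fin.sum_univ_succ, MeasurableEquiv.piFinSuccAbove, Fin.tail]
    have r0 := red 0
    simp only [Pi.zero_apply, zero_add] at r0
    rw [r0, red μ]
    calc _ ≤ (γ.prod (Measure.pi fun _ : Fin m => γ))
          {p | t ≤ p.1 ^ 2 + ∑ i : Fin m, (μ i.succ + p.2 i) ^ 2} := by
          rw [Measure.prod_apply (measurableSet_le (by fun_prop) (by fun_prop)),
            Measure.prod_apply (measurableSet_le (by fun_prop) (by fun_prop))]
          refine lintegral_mono fun x => ?_
          have := ih (fun i => μ i.succ) (t - x ^ 2)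
          simpa only [Set.preimage_setOf_eq, sub_le_iff_le_add'] using this
      _ ≤ _ := by
          rw [Measure.prod_apply_symm (measurableSet_le (by fun_prop) (by fun_prop)),
            Measure.prod_apply_symm (measurableSet_le (by fun_prop) (by fun_prop))]
          refine lintegral_mono fun y => ?_
          have := h (μ 0) (t - ∑ i : Fin m, (μ i.succ + y i) ^ 2)
          simpa only [Set.preimage_setOf_eq, sub_le_iff_le_add] using this

/-- the noncentral chi-square `‖μ + ξ‖₂²` stochastically dominates the central
one `‖ξ‖₂²`, where `ξ` has i.i.d. `N(0, σ²)` coordinates: for every `t ≥ 0`,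
`Pr(‖μ + ξ‖₂² ≥ t) ≥ Pr(‖ξ‖₂² ≥ t)`. -/
theorem noncentral_chisq_stochastically_dominates
    (m : ℕ) (σ : ℝ) (hσ : 0 < σ) (μ : Fin m → ℝ) (t : ℝ) (ht : 0 ≤ t) :
    (Measure.pi fun _ : Fin m => gaussianReal 0 (σ ^ 2).toNNReal)
        {x : Fin m → ℝ | t ≤ ∑ i, x i ^ 2}
      ≤ (Measure.pi fun _ : Fin m => gaussianReal 0 (σ ^ 2).toNNReal)
        {x : Fin m → ℝ | t ≤ ∑ i, (μ i + x i) ^ 2} := by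
  refine aux_multi _ (aux_one_dim _ ?_) m μ t
  have : 0 < σ ^ 2 := by positivity
  exact (Real.toNNReal_pos.2 this).ne'
end

section
/- There exist absolute constants C > 0 and c > 0 such that the following holds. Let n ≥ 2, let d₁ ≥ C (log n)², let v_1, …, v_n ∈ ℝ^{d₁} be arbitrary fixed vectors, and let η_1, …, η_n be independent random vectors in ℝ^{d₁} whose coordinates are independent centered Gaussians N(0, r²B²). Set ṽ_i = v_i + η_i. Then with probability at least 1 − 2/n², for all i ≠ j: ‖ṽ_i − ṽ_j‖₂² ≥ c · r²B² (log n)². -/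
open MeasureTheory ProbabilityTheory

lemma aux_one (v : NNReal) (hv : v ≠ 0) (b : ℝ) :
    ∫⁻ x, ENNReal.ofReal (Real.exp (-(Real.exp 2 / (2 * v)) * (x + b) ^ 2)) ∂(gaussianReal 0 v)
      ≤ ENNReal.ofReal (Real.exp (-1)) := by
  have hv0 : (0 : ℝ) < v := by positivity
  set l : ℝ := Real.exp 2 / (2 * v) with hl
  have hl0 : 0 < l := by positivity
  rw [gaussianReal_of_var_ne_zero _ hv,
    lintegral_withDensity_eq_lintegral_mul _ (measurable_gaussianPDF 0 v) (by fun_prop)]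
  calc _ ≤ ∫⁻ x : ℝ, ENNReal.ofReal ((√(2 * Real.pi * v))⁻¹) *
        ENNReal.ofReal (Real.exp (-l * (x + b) ^ 2)) := by
        apply lintegral_mono
        intro x
        simp only [Pi.mul_apply, gaussianPDF, gaussianPDFReal]
        gcongr
        apply mul_le_of_le_one_right (by positivity)
        apply Real.exp_le_one_iff.2
        rw [neg_div]
        have : 0 ≤ (x - 0) ^ 2 / (2 * (v : ℝ)) := by positivity
        linarith
    _ = ENNReal.ofReal ((√(2 * Real.pi * v))⁻¹) *
        ∫⁻ x : ℝ, ENNReal.ofReal (Real.exp (-l * x ^ 2)) := by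
        rw [lintegral_const_mul _ (by fun_prop)]
        rw [lintegral_add_right_eq_self (fun x : ℝ => ENNReal.ofReal (Real.exp (-l * x ^ 2))) b]
    _ = ENNReal.ofReal ((√(2 * Real.pi * v))⁻¹ * √(Real.pi / l)) := by
        rw [← ofReal_integral_eq_lintegral_ofReal (integrable_exp_neg_mul_sq hl0)
          (ae_of_all _ fun x => (Real.exp_pos _).le), integral_gaussian,
          ENNReal.ofReal_mul (by positivity)]
    _ ≤ _ := by
        apply ENNReal.ofReal_le_ofReal
        rw [← Real.sqrt_inv, ← Real.sqrt_mul (by positivity)]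
        apply Real.sqrt_le_iff.2 ⟨(Real.exp_pos _).le, le_of_eq ?_⟩
        rw [← Real.exp_nat_mul, hl]
        have : Real.exp ((2 : ℕ) * (-1)) = (Real.exp 2)⁻¹ := by
          rw [← Real.exp_neg]; norm_num
        rw [this]
        have := Real.pi_pos
        field_simp

lemma aux_vec (v : NNReal) (hv : v ≠ 0) (d : ℕ) (b : Fin d → ℝ) :
    ∫⁻ x, ENNReal.ofReal (Real.exp (-(Real.exp 2 / (2 * v)) * ∑ m, (x m + b m) ^ 2))
        ∂(Measure.pi fun _ : Fin d => gaussianReal 0 v)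
      ≤ ENNReal.ofReal (Real.exp (-d)) := by
  have h1 : ∀ x : Fin d → ℝ,
      ENNReal.ofReal (Real.exp (-(Real.exp 2 / (2 * v)) * ∑ m, (x m + b m) ^ 2))
      = ∏ m, ENNReal.ofReal (Real.exp (-(Real.exp 2 / (2 * v)) * (x m + b m) ^ 2)) := by
    intro x
    rw [Finset.mul_sum, Real.exp_sum, ENNReal.ofReal_prod_of_nonneg]
    intro i _
    exact (Real.exp_pos _).le
  simp_rw [h1]
  have hi := iIndepFun_pi (μ := fun _ : Fin d => gaussianReal 0 v)
    (X := fun m (t : ℝ) => ENNReal.ofReal (Real.exp (-(Real.exp 2 / (2 * v)) * (t + b m) ^ 2)))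
    (fun m => by fun_prop)
  have h2 := lintegral_prod_eq_prod_lintegral_of_indepFun Finset.univ _ hi (fun m => by fun_prop)
  rw [h2]
  calc _ ≤ ∏ m : Fin d, ENNReal.ofReal (Real.exp (-1)) := by
        apply Finset.prod_le_prod' 
        intro m _
        have := (measurePreserving_eval (fun _ : Fin d => gaussianReal 0 v) m).lintegral_comp
          (f := fun t : ℝ => ENNReal.ofReal (Real.exp (-(Real.exp 2 / (2 * v)) * (t + b m) ^ 2)))
          (by fun_prop)
        simp only [Function.eval] at this
        rw [this]
        exact aux_one v hv _
    _ = _ := by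
        rw [Finset.prod_const, ← ENNReal.ofReal_pow (Real.exp_pos _).le, ← Real.exp_nat_mul]
        simp

lemma aux_pair (s : NNReal) (hs : s ≠ 0) (n d : ℕ) (v : Fin n → Fin d → ℝ) (i j : Fin n)
    (hij : i ≠ j) (t : ℝ) :
    (Measure.pi fun _ : Fin n => Measure.pi fun _ : Fin d => gaussianReal 0 s)
      {η | ¬ (t ≤ ∑ m, ((v i m + η i m) - (v j m + η j m)) ^ 2)}
    ≤ ENNReal.ofReal (Real.exp (Real.exp 2 / (2 * s) * t - d)) := by
  have hs0 : (0 : ℝ) < s := by positivity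
  set l : ℝ := Real.exp 2 / (2 * s) with hl
  have hl0 : 0 < l := by positivity
  set P : Measure (Fin d → ℝ) := Measure.pi fun _ : Fin d => gaussianReal 0 s with hP
  set μ : Measure (Fin n → Fin d → ℝ) := Measure.pi fun _ : Fin n => P with hμ
  let F : (Fin d → ℝ) × (Fin d → ℝ) → ENNReal := fun p =>
    ENNReal.ofReal (Real.exp (-l * ∑ m, (p.2 m + (v i m - (v j m + p.1 m))) ^ 2))
  have hF : Measurable F := by fun_prop
  have hind : IndepFun (fun η : Fin n → Fin d → ℝ => η j) (fun η => η i) μ :=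
    (iIndepFun_pi (μ := fun _ : Fin n => P) (X := fun _ x => x)
      (fun _ => aemeasurable_id)).indepFun hij.symm
  have hmap := (indepFun_iff_map_prod_eq_prod_map_map
    (measurable_pi_apply j).aemeasurable (measurable_pi_apply i).aemeasurable).1 hind
  have hmj : μ.map (fun η => η j) = P := (measurePreserving_eval (fun _ : Fin n => P) j).map_eq
  have hmi : μ.map (fun η => η i) = P := (measurePreserving_eval (fun _ : Fin n => P) i).map_eq
  rw [hmj, hmi] at hmap
  have hint : ∫⁻ η, F (η j, η i) ∂μ ≤ ENNReal.ofReal (Real.exp (-d)) := by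
    have hg : Measurable (fun η : Fin n → Fin d → ℝ => (η j, η i)) :=
      (measurable_pi_apply j).prodMk (measurable_pi_apply i)
    have h3 := lintegral_map (μ := μ) hF hg
    rw [hmap] at h3
    rw [← h3, lintegral_prod _ hF.aemeasurable]
    have hy : ∀ y, ∫⁻ x, F (y, x) ∂P ≤ ENNReal.ofReal (Real.exp (-d)) := fun y =>
      aux_vec s hs d (fun m => v i m - (v j m + y m))
    refine (lintegral_mono hy).trans ?_
    rw [lintegral_const, measure_univ, mul_one]
  have hM := meas_ge_le_lintegral_div (μ := μ) (f := fun η => F (η j, η i))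
    (hF.comp ((measurable_pi_apply j).prodMk (measurable_pi_apply i))).aemeasurable (ε := ENNReal.ofReal (Real.exp (-l * t)))
    (by simpa using Real.exp_pos _) ENNReal.ofReal_ne_top
  refine (measure_mono ?_).trans (hM.trans ?_)
  · intro η hη
    simp only [Set.mem_ofPred_eq, not_le] at hη ⊢
    apply ENNReal.ofReal_le_ofReal
    apply Real.exp_le_exp.2
    rw [neg_mul, neg_mul]
    apply neg_le_neg
    apply mul_le_mul_of_nonneg_left _ hl0.le
    refine le_trans (le_of_eq ?_) hη.le
    apply Finset.sum_congr rfl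
    intro m _
    ring
  · refine (ENNReal.div_le_div_right hint _).trans ?_
    rw [← ENNReal.ofReal_div_of_pos (Real.exp_pos _), ← Real.exp_sub]
    apply ENNReal.ofReal_le_ofReal
    apply Real.exp_le_exp.2
    linarith

/-- there are absolute constants `C, c > 0` such that for any `n ≥ 2` and any
`d₁ ≥ C (log n)²` fixed vectors `v_i ∈ ℝ^{d₁}`, after adding independent Gaussian
perturbations with i.i.d. `N(0, r²B²)` coordinates, with probability at least `1 - 2/n²`
all pairwise squared distances are at least `c r²B² (log n)²`. -/
theorem perturbed_pairwise_distances_lower_bound :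
    ∃ C c : ℝ, 0 < C ∧ 0 < c ∧ ∀ n d₁ : ℕ, 2 ≤ n →
      C * Real.log n ^ 2 ≤ (d₁ : ℝ) →
      ∀ B r : ℝ, 0 < B → 0 < r →
      ∀ v : Fin n → Fin d₁ → ℝ,
        ENNReal.ofReal (1 - 2 / (n : ℝ) ^ 2) ≤
          (Measure.pi fun _ : Fin n => Measure.pi fun _ : Fin d₁ =>
              gaussianReal 0 ((r * B) ^ 2).toNNReal)
            {η : Fin n → Fin d₁ → ℝ | ∀ i j, i ≠ j →
              c * r ^ 2 * B ^ 2 * Real.log n ^ 2 ≤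
                ∑ m, ((v i m + η i m) - (v j m + η j m)) ^ 2} := by
  refine ⟨7, 2 / Real.exp 2, by norm_num, by positivity, ?_⟩
  intro n d hn hd B r hB hr v
  have hrB : 0 < (r * B) ^ 2 := by positivity
  have hs : ((r * B) ^ 2).toNNReal ≠ 0 := by
    simpa using And.intro hr.ne' hB.ne'
  have hcoe : (((r * B) ^ 2).toNNReal : ℝ) = (r * B) ^ 2 := Real.coe_toNNReal _ hrB.le
  set μ := (Measure.pi fun _ : Fin n => Measure.pi fun _ : Fin d =>
              gaussianReal 0 ((r * B) ^ 2).toNNReal) with hμ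
  set t := 2 / Real.exp 2 * r ^ 2 * B ^ 2 * Real.log n ^ 2 with ht
  set G := {η : Fin n → Fin d → ℝ | ∀ i j, i ≠ j →
              t ≤ ∑ m, ((v i m + η i m) - (v j m + η j m)) ^ 2} with hG
  have hn0 : (0 : ℝ) < n := by positivity
  have hlog : 0.69 ≤ Real.log n := by
    have h1 : Real.log 2 ≤ Real.log n := Real.log_le_log (by norm_num) (by exact_mod_cast hn)
    have := Real.log_two_gt_d9
    linarith
  have hpair : ∀ i j : Fin n, i ≠ j →
      μ {η | ¬ (t ≤ ∑ m, ((v i m + η i m) - (v j m + η j m)) ^ 2)}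
        ≤ ENNReal.ofReal (1 / (n : ℝ) ^ 4) := by
    intro i j hij
    refine (aux_pair _ hs n d v i j hij t).trans ?_
    apply ENNReal.ofReal_le_ofReal
    have e1 : 1 / (n : ℝ) ^ 4 = Real.exp (-(4 * Real.log n)) := by
      rw [Real.exp_neg, one_div]
      congr 1
      have : (4 : ℝ) * Real.log n = (4 : ℕ) * Real.log n := by norm_num
      rw [this, Real.exp_nat_mul, Real.exp_log hn0]
    rw [e1, hcoe]
    apply Real.exp_le_exp.2
    have e2 : Real.exp 2 / (2 * (r * B) ^ 2) * t = Real.log n ^ 2 := by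
      rw [ht]; field_simp
    rw [e2]
    nlinarith
  have hbad : μ Gᶜ ≤ ENNReal.ofReal (1 / (n : ℝ) ^ 2) := by
    calc μ Gᶜ ≤ μ (⋃ p : Fin n × Fin n, {η | p.1 ≠ p.2 ∧
          ¬ (t ≤ ∑ m, ((v p.1 m + η p.1 m) - (v p.2 m + η p.2 m)) ^ 2)}) := by
          apply measure_mono
          intro η hη
          simp only [hG, Set.mem_compl_iff, Set.mem_ofPred_eq, not_forall] at hη
          obtain ⟨i, j, hij, h⟩ := hη
          exact Set.mem_iUnion.2 ⟨(i, j), hij, h⟩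
      _ ≤ ∑ p : Fin n × Fin n, μ {η | p.1 ≠ p.2 ∧
          ¬ (t ≤ ∑ m, ((v p.1 m + η p.1 m) - (v p.2 m + η p.2 m)) ^ 2)} :=
          measure_iUnion_fintype_le _ _
      _ ≤ ∑ p : Fin n × Fin n, ENNReal.ofReal (1 / (n : ℝ) ^ 4) := by
          apply Finset.sum_le_sum
          intro p _
          by_cases hp : p.1 = p.2
          · simp [hp]
          · exact (measure_mono fun η h => h.2).trans (hpair p.1 p.2 hp)
      _ = _ := by
          rw [Finset.sum_const, ← ENNReal.ofReal_nsmul]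
          congr 1
          simp
          field_simp
  have h1 : (1 : ENNReal) ≤ μ G + μ Gᶜ := by
    calc (1 : ENNReal) = μ Set.univ := by simp
      _ = μ (G ∪ Gᶜ) := by simp
      _ ≤ _ := measure_union_le _ _
  calc ENNReal.ofReal (1 - 2 / (n : ℝ) ^ 2) ≤ ENNReal.ofReal (1 - 1 / (n : ℝ) ^ 2) := by
        apply ENNReal.ofReal_le_ofReal
        gcongr
        norm_num
    _ = 1 - ENNReal.ofReal (1 / (n : ℝ) ^ 2) := by
        rw [ENNReal.ofReal_sub _ (by positivity), ENNReal.ofReal_one]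
    _ ≤ 1 - μ Gᶜ := tsub_le_tsub_left hbad _
    _ ≤ μ G := tsub_le_iff_right.2 h1
end

section
/- There exist absolute constants C₀ > 0 and C₁ > 0 such that the following holds. Let n ≥ 2, B > 0, r > 0, and let x_1, …, x_n ∈ ℝ^d satisfy ‖x_i‖₂ ≤ B for all i. Suppose the d coordinates are partitioned into T blocks of sizes d_1, …, d_T, and let t be a block with d_t = max_j d_j ≥ C₀ (log n)². Let ξ_1, …, ξ_n be independent random vectors in ℝ^d whose coordinates are independent centered Gaussians N(0, r²B²), and set x̃_i = x_i + ξ_i; write x̃_i^{(t)} ∈ ℝ^{d_t} for the restriction of x̃_i to the coordinates of block t. Then with probability at least 1 − 4/n², for all i ≠ j: ‖x̃_i − x̃_j‖₂² ≤ C₁ · (1/r² + d/(log n)²) · ‖x̃_i^{(t)} − x̃_j^{(t)}‖₂². -/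
open MeasureTheory ProbabilityTheory


lemma vk_lint (c β b : ℝ) (hc : 0 ≤ c) (hβ : 0 < β) :
    ∫⁻ x : ℝ, ENNReal.ofReal (c * Real.exp (-β * (b + x) ^ 2)) =
      ENNReal.ofReal (c * Real.sqrt (Real.pi / β)) := by
  have h1 := (integrable_exp_neg_mul_sq hβ).const_mul c
  have h2 : ∫⁻ x : ℝ, ENNReal.ofReal (c * Real.exp (-β * x ^ 2)) =
      ENNReal.ofReal (c * Real.sqrt (Real.pi / β)) := by
    rw [← ofReal_integral_eq_lintegral_ofReal h1 (Filter.Eventually.of_forall fun x => by positivity),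
      integral_const_mul, integral_gaussian]
  rw [← h2]
  exact lintegral_add_left_eq_self (fun x : ℝ => ENNReal.ofReal (c * Real.exp (-β * x ^ 2))) b

lemma vk_exp_half : Real.exp (1 / 2) ≤ 2 := by
  have h : Real.exp (1 / 2) * Real.exp (1 / 2) = Real.exp 1 := by
    rw [← Real.exp_add]; norm_num
  have := Real.exp_one_lt_d9
  nlinarith [Real.exp_pos (1 / 2 : ℝ)]

lemma vk_low (v : NNReal) (hv : v ≠ 0) (b : ℝ) :
    ∫⁻ x, ENNReal.ofReal (Real.exp (-2 * (b + x) ^ 2 / v)) ∂(gaussianReal 0 v) ≤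
      ENNReal.ofReal (Real.exp (-(1 / 2))) := by
  have hv' : (0 : ℝ) < v := by positivity
  have hpi := Real.pi_pos
  rw [gaussianReal_of_var_ne_zero _ hv,
    lintegral_withDensity_eq_lintegral_mul _ (measurable_gaussianPDF _ _) (by fun_prop)]
  calc _ ≤ ∫⁻ x : ℝ, ENNReal.ofReal ((Real.sqrt (2 * Real.pi * v))⁻¹ *
            Real.exp (-(2 / (v : ℝ)) * (b + x) ^ 2)) := by
        refine lintegral_mono fun x => ?_
        simp only [Pi.mul_apply, gaussianPDF, gaussianPDFReal]
        rw [← ENNReal.ofReal_mul (by positivity)]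
        apply ENNReal.ofReal_le_ofReal
        have h1 : Real.exp (-(x - 0) ^ 2 / (2 * v)) ≤ 1 := by
          rw [Real.exp_le_one_iff]
          apply div_nonpos_of_nonpos_of_nonneg <;> nlinarith [sq_nonneg (x - 0)]
        have h2 : -2 * (b + x) ^ 2 / (v : ℝ) = -(2 / (v : ℝ)) * (b + x) ^ 2 := by ring
        rw [h2]
        gcongr
        exact mul_le_of_le_one_right (by positivity) h1
    _ = ENNReal.ofReal ((Real.sqrt (2 * Real.pi * v))⁻¹ * Real.sqrt (Real.pi / (2 / (v : ℝ)))) :=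
        vk_lint _ _ _ (by positivity) (by positivity)
    _ ≤ _ := by
        apply ENNReal.ofReal_le_ofReal
        have h3 : Real.sqrt (2 * Real.pi * v) = 2 * Real.sqrt (Real.pi / (2 / (v : ℝ))) := by
          rw [show 2 * Real.pi * (v : ℝ) = 2 ^ 2 * (Real.pi / (2 / (v : ℝ))) by field_simp,
            Real.sqrt_mul (by positivity), Real.sqrt_sq (by norm_num)]
        have h4 : 0 < Real.sqrt (Real.pi / (2 / (v : ℝ))) := by positivity
        rw [h3, Real.exp_neg, mul_inv, mul_assoc, inv_mul_cancel₀ h4.ne', mul_one]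
        exact inv_anti₀ (Real.exp_pos _) vk_exp_half

lemma vk_up (v : NNReal) (hv : v ≠ 0) :
    ∫⁻ x, ENNReal.ofReal (Real.exp (x ^ 2 / (4 * v))) ∂(gaussianReal 0 v) ≤
      ENNReal.ofReal (Real.exp (1 / 2)) := by
  have hv' : (0 : ℝ) < v := by positivity
  have hpi := Real.pi_pos
  rw [gaussianReal_of_var_ne_zero _ hv,
    lintegral_withDensity_eq_lintegral_mul _ (measurable_gaussianPDF _ _) (by fun_prop)]
  calc _ = ∫⁻ x : ℝ, ENNReal.ofReal ((Real.sqrt (2 * Real.pi * v))⁻¹ *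
            Real.exp (-(1 / (4 * v : ℝ)) * (0 + x) ^ 2)) := by
        refine lintegral_congr fun x => ?_
        simp only [Pi.mul_apply, gaussianPDF, gaussianPDFReal]
        rw [← ENNReal.ofReal_mul (by positivity), mul_assoc, ← Real.exp_add]
        congr 3
        field_simp
        ring
    _ = ENNReal.ofReal ((Real.sqrt (2 * Real.pi * v))⁻¹ *
          Real.sqrt (Real.pi / (1 / (4 * v : ℝ)))) :=
        vk_lint _ _ _ (by positivity) (by positivity)
    _ ≤ _ := by
        apply ENNReal.ofReal_le_ofReal
        have h3 : Real.sqrt (Real.pi / (1 / (4 * v : ℝ))) =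
            Real.sqrt 2 * Real.sqrt (2 * Real.pi * v) := by
          rw [← Real.sqrt_mul (by norm_num)]
          congr 1
          field_simp
          ring
        have h4 : 0 < Real.sqrt (2 * Real.pi * v) := by positivity
        rw [h3, mul_comm, mul_assoc, mul_inv_cancel₀ h4.ne', mul_one]
        have h5 : Real.exp (1 / 2) * Real.exp (1 / 2) = Real.exp 1 := by
          rw [← Real.exp_add]; norm_num
        have := Real.add_one_le_exp (1 : ℝ)
        rw [Real.sqrt_le_left (Real.exp_pos _).le]
        nlinarith

lemma vk_chernoff {d : ℕ} (ν : Measure ℝ) [IsProbabilityMeasure ν] (g : Fin d → ℝ → ℝ)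
    (hg : ∀ m, Measurable (g m)) (c : Fin d → ℝ)
    (h : ∀ m, ∫⁻ x, ENNReal.ofReal (Real.exp (g m x)) ∂ν ≤ ENNReal.ofReal (Real.exp (c m)))
    (s : ℝ) :
    (Measure.pi fun _ : Fin d => ν) {y | s ≤ ∑ m, g m (y m)} ≤
      ENNReal.ofReal (Real.exp (∑ m, c m - s)) := by
  have hmeas : ∀ m, Measurable fun x => ENNReal.ofReal (Real.exp (g m x)) := fun m =>
    ENNReal.measurable_ofReal.comp (Real.measurable_exp.comp (hg m))
  have hind : iIndepFun (fun (m : Fin d) (y : Fin d → ℝ) => ENNReal.ofReal (Real.exp (g m (y m))))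
      (Measure.pi fun _ : Fin d => ν) :=
    iIndepFun_pi (X := fun m x => ENNReal.ofReal (Real.exp (g m x)))
      fun m => (hmeas m).aemeasurable
  have hprod : ∫⁻ y, ∏ m, ENNReal.ofReal (Real.exp (g m (y m))) ∂(Measure.pi fun _ : Fin d => ν)
      ≤ ENNReal.ofReal (Real.exp (∑ m, c m)) := by
    rw [lintegral_prod_eq_prod_lintegral_of_indepFun Finset.univ _ hind
      (fun m => (hmeas m).comp (measurable_pi_apply m))]
    rw [Real.exp_sum, ENNReal.ofReal_prod_of_nonneg (fun _ _ => (Real.exp_pos _).le)]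
    refine Finset.prod_le_prod' fun m _ => ?_
    rw [(measurePreserving_eval (fun _ : Fin d => ν) m).lintegral_comp (hmeas m)]
    exact h m
  have hset : {y : Fin d → ℝ | s ≤ ∑ m, g m (y m)} ⊆
      {y | ENNReal.ofReal (Real.exp s) ≤ ∏ m, ENNReal.ofReal (Real.exp (g m (y m)))} := by
    intro y hy
    simp only [Set.mem_ofPred_eq] at hy ⊢
    rw [← ENNReal.ofReal_prod_of_nonneg (fun _ _ => (Real.exp_pos _).le), ← Real.exp_sum]
    exact ENNReal.ofReal_le_ofReal (Real.exp_le_exp.2 hy)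
  refine (measure_mono hset).trans ?_
  refine (meas_ge_le_lintegral_div ?_ ?_ ENNReal.ofReal_ne_top).trans ?_
  · exact (Finset.measurable_prod _ fun m _ => (hmeas m).comp (measurable_pi_apply m)).aemeasurable
  · simpa using Real.exp_pos s
  · rw [Real.exp_sub, ENNReal.ofReal_div_of_pos (Real.exp_pos s)]
    gcongr

lemma vk_slice {n : ℕ} {X : Type*} [MeasurableSpace X] (ν : Measure X) [IsProbabilityMeasure ν]
    (i : Fin n) (S : Set (Fin n → X)) (hS : MeasurableSet S) (c : ENNReal)
    (h : ∀ x : Fin n → X, ν {y | Function.update x i y ∈ S} ≤ c) :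
    (Measure.pi fun _ : Fin n => ν) S ≤ c := by
  have hX : Nonempty X := ν.nonempty_of_neZero
  have hf : Measurable (S.indicator (1 : (Fin n → X) → ENNReal)) := measurable_one.indicator hS
  rw [← lintegral_indicator_one hS,
    lintegral_eq_lmarginal_univ (fun _ => hX.some),
    lmarginal_erase' _ hf (Finset.mem_univ i)]
  refine (lmarginal_mono (g := fun _ => c) ?_ _).trans ?_
  · intro x
    refine le_trans (le_of_eq ?_) (h x)
    have hm : MeasurableSet {y | Function.update x i y ∈ S} := measurable_update x hS
    rw [← lintegral_indicator_one hm]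
    rfl
  · simp [lmarginal]

lemma vk_up_event {n d : ℕ} (v : NNReal) (hv : v ≠ 0) (i : Fin n) :
    (Measure.pi fun _ : Fin n => Measure.pi fun _ : Fin d => gaussianReal 0 v)
      {ξ | 4 * v * (d : ℝ) ≤ ∑ m, ξ i m ^ 2} ≤ ENNReal.ofReal (Real.exp (-(d / 2))) := by
  have hv' : (0 : ℝ) < v := by positivity
  apply vk_slice _ i
  · exact measurableSet_le measurable_const (by fun_prop)
  · intro x
    have := vk_chernoff (d := d) (gaussianReal 0 v) (fun _ x => x ^ 2 / (4 * v))
      (fun _ => by fun_prop) (fun _ => 1 / 2) (fun _ => vk_up v hv) d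
    refine (measure_mono ?_).trans (this.trans (le_of_eq ?_))
    · intro y hy
      simp only [Set.mem_ofPred_eq, Function.update_self] at hy ⊢
      rw [← Finset.sum_div, le_div_iff₀ (by positivity)]
      linarith
    · congr 2
      simp
      ring

lemma vk_low_event {n d : ℕ} (v : NNReal) (hv : v ≠ 0) (i j : Fin n) (hij : i ≠ j)
    (x : Fin n → Fin d → ℝ) (s : Finset (Fin d)) :
    (Measure.pi fun _ : Fin n => Measure.pi fun _ : Fin d => gaussianReal 0 v)
      {ξ | ∑ m ∈ s, ((x i m + ξ i m) - (x j m + ξ j m)) ^ 2 ≤ v * (s.card : ℝ) / 8} ≤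
      ENNReal.ofReal (Real.exp (-(s.card / 4))) := by
  classical
  have hv' : (0 : ℝ) < v := by positivity
  apply vk_slice _ i
  · exact measurableSet_le (by fun_prop) measurable_const
  · intro z
    have := vk_chernoff (d := d) (gaussianReal 0 v)
      (fun m y => if m ∈ s then -2 * ((x i m - (x j m + z j m)) + y) ^ 2 / v else 0)
      (fun m => by by_cases h : m ∈ s <;> simp only [h, if_true, if_false] <;> fun_prop)
      (fun m => if m ∈ s then -(1 / 2) else 0)
      (fun m => by
        by_cases h : m ∈ s
        · simpa only [h, if_true] using vk_low v hv _
        · simp [h]) (-((s.card : ℝ) / 4))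
    refine (measure_mono ?_).trans (this.trans (le_of_eq ?_))
    · intro y hy
      simp only [Set.mem_ofPred_eq, Function.update_self, Function.update_of_ne hij.symm] at hy ⊢
      rw [Finset.sum_ite_mem, Finset.univ_inter, ← Finset.sum_div, ← Finset.mul_sum,
        le_div_iff₀ (by positivity)]
      have e : ∑ m ∈ s, (x i m - (x j m + z j m) + y m) ^ 2 =
          ∑ m ∈ s, (x i m + y m - (x j m + z j m)) ^ 2 :=
        Finset.sum_congr rfl fun m _ => by ring
      rw [e]
      nlinarith
    · congr 2
      rw [Finset.sum_ite_mem, Finset.univ_inter]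
      simp
      ring

lemma vk_det {d : ℕ} (B r L D v : ℝ) (hB : 0 < B) (hr : 0 < r) (hL : 0 < L) (hv : v = (r * B) ^ 2)
    (hD : 32 * L ^ 2 ≤ D) (hD1 : 1 ≤ D) (a b p q : Fin d → ℝ) (ha : ∑ m, a m ^ 2 ≤ B ^ 2)
    (hb : ∑ m, b m ^ 2 ≤ B ^ 2) (hp : ∑ m, p m ^ 2 ≤ 4 * v * d) (hq : ∑ m, q m ^ 2 ≤ 4 * v * d)
    (Z : ℝ) (hZ : v * D / 8 ≤ Z) :
    ∑ m, ((a m + p m) - (b m + q m)) ^ 2 ≤ 64 * (1 / r ^ 2 + (d : ℝ) / L ^ 2) * Z := by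
  have h1 : ∑ m, ((a m + p m) - (b m + q m)) ^ 2 ≤
      ∑ m, (4 * a m ^ 2 + 4 * b m ^ 2 + 4 * p m ^ 2 + 4 * q m ^ 2) := by
    refine Finset.sum_le_sum fun m _ => ?_
    nlinarith [sq_nonneg (a m + b m), sq_nonneg (a m - p m), sq_nonneg (a m + q m),
      sq_nonneg (b m + p m), sq_nonneg (b m - q m), sq_nonneg (p m + q m)]
  simp only [Finset.sum_add_distrib, ← Finset.mul_sum] at h1
  have h2 : 64 * (1 / r ^ 2 + (d : ℝ) / L ^ 2) * (v * D / 8) ≤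
      64 * (1 / r ^ 2 + (d : ℝ) / L ^ 2) * Z := by gcongr
  have h3 : 64 * (1 / r ^ 2 + (d : ℝ) / L ^ 2) * (v * D / 8) =
      8 * B ^ 2 * D + 8 * v * d * (D / L ^ 2) := by
    rw [hv]; field_simp; norm_num
  have h4 : 32 ≤ D / L ^ 2 := by rw [le_div_iff₀ (by positivity)]; exact hD
  have hv0 : 0 ≤ v := by rw [hv]; positivity
  have h5 : 8 * v * d * 32 ≤ 8 * v * d * (D / L ^ 2) := by gcongr
  have h6 : 8 * B ^ 2 * 1 ≤ 8 * B ^ 2 * D := by gcongr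
  have h7 : 0 ≤ v * d := by positivity
  linarith

/-- there are absolute constants `C₀, C₁ > 0` such that for any `n ≥ 2` points
`x_i ∈ ℝ^d` with `‖x_i‖₂ ≤ B`, whose coordinates are partitioned into `T` blocks via
`blk : Fin d → Fin T`, if block `t` has maximal size `d_t ≥ C₀ (log n)²`, then after adding
independent Gaussian perturbations with i.i.d. `N(0, r²B²)` coordinates, with probability
at least `1 - 4/n²`, for all `i ≠ j`,
`‖x̃_i - x̃_j‖₂² ≤ C₁ (1/r² + d/(log n)²) ‖x̃_i^{(t)} - x̃_j^{(t)}‖₂²`. -/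
theorem perturbed_data_satisfies_vkmc_assumption :
    ∃ C₀ C₁ : ℝ, 0 < C₀ ∧ 0 < C₁ ∧ ∀ n d T : ℕ, 2 ≤ n → ∀ B r : ℝ, 0 < B → 0 < r →
      ∀ x : Fin n → Fin d → ℝ,
        (∀ i, Real.sqrt (∑ m, x i m ^ 2) ≤ B) →
        ∀ (blk : Fin d → Fin T) (t : Fin T),
        (∀ j : Fin T, (Finset.univ.filter fun m => blk m = j).card ≤
            (Finset.univ.filter fun m => blk m = t).card) →
        C₀ * Real.log n ^ 2 ≤ ((Finset.univ.filter fun m => blk m = t).card : ℝ) →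
        ENNReal.ofReal (1 - 4 / (n : ℝ) ^ 2) ≤
          (Measure.pi fun _ : Fin n => Measure.pi fun _ : Fin d =>
              gaussianReal 0 ((r * B) ^ 2).toNNReal)
            {ξ : Fin n → Fin d → ℝ | ∀ i j, i ≠ j →
              (∑ m, ((x i m + ξ i m) - (x j m + ξ j m)) ^ 2) ≤
                C₁ * (1 / r ^ 2 + (d : ℝ) / Real.log n ^ 2) *
                  ∑ m ∈ Finset.univ.filter (fun m => blk m = t),
                    ((x i m + ξ i m) - (x j m + ξ j m)) ^ 2} := by
  refine ⟨32, 64, by norm_num, by norm_num, ?_⟩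
  intro n d T hn B r hB hr x hx blk t _ hcard
  set s := Finset.univ.filter fun m => blk m = t with hs
  set v : NNReal := ((r * B) ^ 2).toNNReal with hvdef
  have hvr : (v : ℝ) = (r * B) ^ 2 := Real.coe_toNNReal _ (by positivity)
  have hv : v ≠ 0 := by
    intro h
    rw [h] at hvr
    have : 0 < (r * B) ^ 2 := by positivity
    simp only [NNReal.coe_zero] at hvr
    linarith
  set μ := Measure.pi fun _ : Fin n => Measure.pi fun _ : Fin d => gaussianReal 0 v with hμ
  have hn0 : (0 : ℝ) < n := by positivity
  have hlog2 : (1 : ℝ) / 2 ≤ Real.log n := by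
    have h1 : Real.log 2 ≤ Real.log n := Real.log_le_log (by norm_num) (by exact_mod_cast hn)
    have := Real.log_two_gt_d9
    linarith
  have hL : 0 < Real.log n := by linarith
  have hD16 : 16 * Real.log n ≤ (s.card : ℝ) := by nlinarith
  have hD1 : (1 : ℝ) ≤ s.card := by linarith
  have hsd : (s.card : ℝ) ≤ d := by
    have := Finset.card_le_univ s
    rw [Fintype.card_fin] at this
    exact_mod_cast this
  have hexp : Real.exp (-((s.card : ℝ) / 4)) ≤ 1 / (n : ℝ) ^ 4 := by
    have : Real.exp (-(4 * Real.log n)) = 1 / (n : ℝ) ^ 4 := by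
      rw [Real.exp_neg, one_div]
      congr 1
      rw [show 4 * Real.log (n : ℝ) = ((4 : ℕ) : ℝ) * Real.log n by norm_num, Real.exp_nat_mul,
        Real.exp_log hn0]
    rw [← this]
    exact Real.exp_le_exp.2 (by linarith)
  set U : Fin n → Set (Fin n → Fin d → ℝ) := fun i => {ξ | 4 * v * (d : ℝ) ≤ ∑ m, ξ i m ^ 2} with hU
  set W : Fin n → Fin n → Set (Fin n → Fin d → ℝ) := fun i j =>
    if i = j then ∅ else
      {ξ | ∑ m ∈ s, ((x i m + ξ i m) - (x j m + ξ j m)) ^ 2 ≤ v * (s.card : ℝ) / 8} with hW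
  set bad : Set (Fin n → Fin d → ℝ) := (⋃ i, U i) ∪ ⋃ i, ⋃ j, W i j with hbad
  have hUm : ∀ i, MeasurableSet (U i) := fun i =>
    measurableSet_le measurable_const (by fun_prop)
  have hWm : ∀ i j, MeasurableSet (W i j) := by
    intro i j
    simp only [hW]
    split_ifs
    · exact MeasurableSet.empty
    · exact measurableSet_le (by fun_prop) measurable_const
  have hbm : MeasurableSet bad :=
    (MeasurableSet.iUnion hUm).union (MeasurableSet.iUnion fun i => MeasurableSet.iUnion (hWm i))
  have hUb : ∀ i, μ (U i) ≤ ENNReal.ofReal (1 / (n : ℝ) ^ 4) := fun i =>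
    (vk_up_event v hv i).trans (ENNReal.ofReal_le_ofReal
      ((Real.exp_le_exp.2 (by linarith)).trans hexp))
  have hWb : ∀ i j, μ (W i j) ≤ ENNReal.ofReal (1 / (n : ℝ) ^ 4) := by
    intro i j
    simp only [hW]
    split_ifs with h
    · simp
    · exact (vk_low_event v hv i j h x s).trans (ENNReal.ofReal_le_ofReal hexp)
  have hbb : μ bad ≤ ENNReal.ofReal (4 / (n : ℝ) ^ 2) := by
    have h1 : μ (⋃ i, U i) ≤ ∑ _i : Fin n, ENNReal.ofReal (1 / (n : ℝ) ^ 4) :=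
      (measure_iUnion_fintype_le μ U).trans (Finset.sum_le_sum fun i _ => hUb i)
    have h2 : μ (⋃ i, ⋃ j, W i j) ≤
        ∑ _i : Fin n, ∑ _j : Fin n, ENNReal.ofReal (1 / (n : ℝ) ^ 4) :=
      (measure_iUnion_fintype_le μ _).trans (Finset.sum_le_sum fun i _ =>
        (measure_iUnion_fintype_le μ _).trans (Finset.sum_le_sum fun j _ => hWb i j))
    refine (measure_union_le _ _).trans ((add_le_add h1 h2).trans ?_)
    simp only [← ENNReal.ofReal_sum_of_nonneg (fun _ _ => show (0 : ℝ) ≤ 1 / (n : ℝ) ^ 4 by positivity)]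
    rw [← ENNReal.ofReal_sum_of_nonneg (fun _ _ => by positivity),
      ← ENNReal.ofReal_add (by positivity) (by positivity)]
    apply ENNReal.ofReal_le_ofReal
    simp only [Finset.sum_const, Finset.card_univ, Fintype.card_fin, nsmul_eq_mul]
    have hn1 : (1 : ℝ) ≤ n := by exact_mod_cast (by omega : 1 ≤ n)
    rw [show (n : ℝ) * (1 / (n : ℝ) ^ 4) + n * (n * (1 / (n : ℝ) ^ 4)) =
      (n + n ^ 2) / (n : ℝ) ^ 4 by ring, div_le_div_iff₀ (by positivity) (by positivity)]
    have : (n : ℝ) + n ^ 2 ≤ 4 * n ^ 2 := by nlinarith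
    calc ((n : ℝ) + n ^ 2) * n ^ 2 ≤ (4 * n ^ 2) * n ^ 2 := by gcongr
      _ = _ := by ring
  have hsq : ∀ i, ∑ m, x i m ^ 2 ≤ B ^ 2 := fun i => (Real.sqrt_le_left hB.le).1 (hx i)
  calc ENNReal.ofReal (1 - 4 / (n : ℝ) ^ 2) = 1 - ENNReal.ofReal (4 / (n : ℝ) ^ 2) := by
        rw [ENNReal.ofReal_sub _ (by positivity), ENNReal.ofReal_one]
    _ ≤ 1 - μ bad := tsub_le_tsub_left hbb _
    _ = μ badᶜ := (prob_compl_eq_one_sub hbm).symm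
    _ ≤ _ := by
        refine measure_mono ?_
        intro ξ hξ i j hij
        simp only [hbad, hU, hW, Set.mem_compl_iff, Set.mem_union, Set.mem_iUnion, not_or,
          not_exists] at hξ
        obtain ⟨h1, h2⟩ := hξ
        have h3 := h2 i j
        rw [if_neg hij] at h3
        simp only [Set.mem_ofPred_eq, not_le] at h1 h3
        exact vk_det B r (Real.log n) s.card v hB hr hL hvr hcard hD1 (x i) (x j) (ξ i) (ξ j)
          (hsq i) (hsq j) (h1 i).le (h1 j).le _ h3.le
end

section
/- Let X ∈ ℝ^{n×d} with rows x_1ᵀ, …, x_nᵀ, let y ∈ ℝ^n, and let U ∈ ℝ^{n×d'} and A ∈ ℝ^{d'×(d+1)} be matrices such that the augmented matrix [X, y] equals U·A. Suppose γ > 0 satisfies ‖U w‖₂ ≥ γ ‖w‖₂ for all w ∈ ℝ^{d'}. Then for every i ∈ [n] and every θ ∈ ℝ^d: (x_iᵀθ − y_i)² ≤ (‖u_i‖₂² / γ²) · ‖Xθ − y‖₂², where u_i denotes the i-th row of U. -/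
/-- if `[X, y] = U · A` and `‖U w‖₂ ≥ γ ‖w‖₂` for all `w`, then for every row
`i` and every `θ`, `(x_iᵀθ - y_i)² ≤ (‖u_i‖₂²/γ²) ‖Xθ - y‖₂²`. -/
theorem regression_residual_sensitivity_bound (n d d' : ℕ)
    (X : Matrix (Fin n) (Fin d) ℝ) (y : Fin n → ℝ)
    (U : Matrix (Fin n) (Fin d') ℝ) (A : Matrix (Fin d') (Fin (d + 1)) ℝ)
    (haug : (Matrix.of fun i => Fin.snoc (X i) (y i)) = U * A)
    (γ : ℝ) (hγ : 0 < γ)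
    (hU : ∀ w : Fin d' → ℝ,
      γ * Real.sqrt (∑ c, w c ^ 2) ≤ Real.sqrt (∑ i, U.mulVec w i ^ 2)) :
    ∀ (i : Fin n) (θ : Fin d → ℝ),
      ((∑ m, X i m * θ m) - y i) ^ 2 ≤
        (∑ c, U i c ^ 2) / γ ^ 2 * ∑ i', (X.mulVec θ i' - y i') ^ 2 := by
  intro i θ
  set v : Fin (d + 1) → ℝ := Fin.snoc (α := fun _ => ℝ) θ (-1) with hv
  set w : Fin d' → ℝ := A.mulVec v with hw
  have key : ∀ j, U.mulVec w j = X.mulVec θ j - y j := by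
    intro j
    rw [hw, Matrix.mulVec_mulVec, ← haug]
    simp only [Matrix.mulVec, dotProduct, Matrix.of_apply]
    rw [Fin.sum_univ_castSucc]
    simp [hv, sub_eq_add_neg]
  have h1 : (∑ m, X i m * θ m) - y i = ∑ c, U i c * w c := (key i).symm
  have h2 := hU w
  simp only [key] at h2
  have hw0 : 0 ≤ ∑ c, w c ^ 2 := Finset.sum_nonneg fun _ _ => sq_nonneg _
  have hr0 : 0 ≤ ∑ i', (X.mulVec θ i' - y i') ^ 2 := Finset.sum_nonneg fun _ _ => sq_nonneg _
  have hu0 : 0 ≤ ∑ c, U i c ^ 2 := Finset.sum_nonneg fun _ _ => sq_nonneg _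
  have h3 : γ ^ 2 * ∑ c, w c ^ 2 ≤ ∑ i', (X.mulVec θ i' - y i') ^ 2 := by
    have := pow_le_pow_left₀ (by positivity) h2 2
    rwa [mul_pow, Real.sq_sqrt hw0, Real.sq_sqrt hr0] at this
  have h4 := Finset.sum_mul_sq_le_sq_mul_sq Finset.univ (U i) w
  rw [h1, div_mul_eq_mul_div, le_div_iff₀ (by positivity)]
  calc _ ≤ ((∑ c, U i c ^ 2) * ∑ c, w c ^ 2) * γ ^ 2 := by gcongr
    _ = (∑ c, U i c ^ 2) * (γ ^ 2 * ∑ c, w c ^ 2) := by ring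
    _ ≤ _ := by gcongr
end

section
/- Let X ∈ ℝ^{n×d} with rows x_1ᵀ, …, x_nᵀ, let y ∈ ℝ^n, and let U ∈ ℝ^{n×d'} and A ∈ ℝ^{d'×(d+1)} be matrices such that [X, y] = U·A. Suppose γ > 0 satisfies ‖U w‖₂ ≥ γ ‖w‖₂ for all w ∈ ℝ^{d'}. Let R : ℝ^d → ℝ_{≥0} and λ ≥ 0. Then for every i ∈ [n] and every θ ∈ ℝ^d with ‖Xθ − y‖₂² + λR(θ) > 0: ( (x_iᵀθ − y_i)² + λR(θ)/n ) / ( ‖Xθ − y‖₂² + λR(θ) ) ≤ ‖u_i‖₂²/γ² + 1/n, where u_i denotes the i-th row of U. That is, the sensitivity of the i-th point for regularized linear regression is at most ‖u_i‖₂²/γ² + 1/n. -/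
/-- under the same hypotheses as Statement 7, the sensitivity of point `i`
for regularized linear regression is at most `‖u_i‖₂²/γ² + 1/n`. -/
theorem regularized_regression_sensitivity_bound (n d d' : ℕ) (hn : 0 < n)
    (X : Matrix (Fin n) (Fin d) ℝ) (y : Fin n → ℝ)
    (U : Matrix (Fin n) (Fin d') ℝ) (A : Matrix (Fin d') (Fin (d + 1)) ℝ)
    (haug : (Matrix.of fun i => Fin.snoc (X i) (y i)) = U * A)
    (γ : ℝ) (hγ : 0 < γ)
    (hU : ∀ w : Fin d' → ℝ,
      γ * Real.sqrt (∑ c, w c ^ 2) ≤ Real.sqrt (∑ i, U.mulVec w i ^ 2))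
    (R : (Fin d → ℝ) → ℝ) (hR : ∀ θ, 0 ≤ R θ) (lam : ℝ) (hlam : 0 ≤ lam) :
    ∀ (i : Fin n) (θ : Fin d → ℝ),
      0 < (∑ i', (X.mulVec θ i' - y i') ^ 2) + lam * R θ →
      (((∑ m, X i m * θ m) - y i) ^ 2 + lam * R θ / n) /
          ((∑ i', (X.mulVec θ i' - y i') ^ 2) + lam * R θ) ≤
        (∑ c, U i c ^ 2) / γ ^ 2 + 1 / n := by
  intro i θ hpos
  have key : ∀ j, U.mulVec (A.mulVec (Fin.snoc (α := fun _ => ℝ) θ (-1))) j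
      = (∑ m, X j m * θ m) - y j := by
    intro j
    rw [Matrix.mulVec_mulVec, ← haug]
    simp only [Matrix.mulVec, dotProduct, Matrix.of_apply]
    rw [Fin.sum_univ_castSucc]
    simp only [Fin.snoc_castSucc, Fin.snoc_last]
    ring
  generalize A.mulVec (Fin.snoc (α := fun _ => ℝ) θ (-1)) = w at key
  have hS : ∑ i', (X.mulVec θ i' - y i') ^ 2 = ∑ j, U.mulVec w j ^ 2 := by
    refine Finset.sum_congr rfl fun j _ => ?_
    rw [key j]
    rfl
  have hW := hU w
  rw [← hS] at hW
  have hW0 : 0 ≤ ∑ c, w c ^ 2 := Finset.sum_nonneg fun _ _ => sq_nonneg _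
  have hS0 : 0 ≤ ∑ i', (X.mulVec θ i' - y i') ^ 2 := Finset.sum_nonneg fun _ _ => sq_nonneg _
  have hu0 : 0 ≤ ∑ c, U i c ^ 2 := Finset.sum_nonneg fun _ _ => sq_nonneg _
  have hW2 := pow_le_pow_left₀ (mul_nonneg hγ.le (Real.sqrt_nonneg _)) hW 2
  rw [mul_pow, Real.sq_sqrt hW0, Real.sq_sqrt hS0] at hW2
  have hcs : ((∑ m, X i m * θ m) - y i) ^ 2 ≤ (∑ c, U i c ^ 2) * ∑ c, w c ^ 2 := by
    rw [← key i]
    exact Finset.sum_mul_sq_le_sq_mul_sq Finset.univ (fun c => U i c) w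
  have hL : 0 ≤ lam * R θ := mul_nonneg hlam (hR θ)
  have hn' : (0 : ℝ) < n := by exact_mod_cast hn
  rw [div_le_iff₀ hpos]
  generalize (∑ i', (X.mulVec θ i' - y i') ^ 2) = S at *
  generalize (∑ c, U i c ^ 2) = u at *
  generalize (∑ c, w c ^ 2) = W at *
  generalize lam * R θ = L at *
  have h1 : u * W ≤ u / γ ^ 2 * S := by
    calc u * W = u / γ ^ 2 * (γ ^ 2 * W) := by field_simp
      _ ≤ _ := by gcongr
  have h2 : 0 ≤ u / γ ^ 2 * L := by positivity
  have h3 : 0 ≤ 1 / (n : ℝ) * S := by positivity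
  have h4 : L / n = 1 / (n : ℝ) * L := by ring
  rw [h4]
  nlinarith
end

section
/- Let x_1, …, x_n ∈ ℝ^d, let P : ℝ^d → ℝ^{d_t} be the projection onto a fixed subset of d_t coordinates, and let τ > 0 satisfy ‖x_i − x_j‖₂² ≤ τ ‖P x_i − P x_j‖₂² for all i, j ∈ [n]. Let B_1, …, B_k be a partition of [n] into nonempty sets, let c_1, …, c_k ∈ ℝ^{d_t} be arbitrary points, and for each l let μ_l = (1/|B_l|) Σ_{i∈B_l} x_i ∈ ℝ^d be the centroid of cluster B_l. Then Σ_{i=1}^n min_{1≤l≤k} ‖x_i − μ_l‖₂² ≤ τ · Σ_{l=1}^k Σ_{i∈B_l} ‖P x_i − c_l‖₂². -/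
theorem pair_sum_aux {ι : Type*} (s : Finset ι) (f : ι → ℝ) (c : ℝ) :
    ∑ i ∈ s, ∑ j ∈ s, (f i - f j) ^ 2 =
      2 * s.card * ∑ i ∈ s, (f i - c) ^ 2 - 2 * (∑ i ∈ s, f i - s.card * c) ^ 2 := by
  have h1 : ∀ i j, (f i - f j) ^ 2 =
      (f i - c) ^ 2 + (f j - c) ^ 2 - 2 * ((f i - c) * (f j - c)) := by
    intro i j; ring
  have h2 : ∑ i ∈ s, f i - s.card * c = ∑ i ∈ s, (f i - c) := by
    simp [Finset.sum_sub_distrib]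
  rw [h2]
  simp only [h1, Finset.sum_sub_distrib (f := fun i => _ + _), Finset.sum_sub_distrib,
    Finset.sum_add_distrib, ← Finset.mul_sum, ← Finset.sum_mul, Finset.sum_const, nsmul_eq_mul]
  ring

theorem cluster_aux {n d dt : ℕ} (x : Fin n → Fin d → ℝ) (emb : Fin dt → Fin d)
    (τ : ℝ) (hτ : 0 < τ)
    (hproj : ∀ i j, (∑ m, (x i m - x j m) ^ 2) ≤ τ * ∑ a, (x i (emb a) - x j (emb a)) ^ 2)
    (s : Finset (Fin n)) (hs : s.Nonempty) (c : Fin dt → ℝ) :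
    ∑ i ∈ s, ∑ m, (x i m - (∑ i ∈ s, x i m) / s.card) ^ 2 ≤
      τ * ∑ i ∈ s, ∑ a, (x i (emb a) - c a) ^ 2 := by
  have hN : (0 : ℝ) < s.card := by exact_mod_cast hs.card_pos
  have e1 : ∑ i ∈ s, ∑ j ∈ s, ∑ m, (x i m - x j m) ^ 2 =
      2 * s.card * ∑ i ∈ s, ∑ m, (x i m - (∑ i ∈ s, x i m) / s.card) ^ 2 := by
    rw [Finset.sum_comm (s := s) (t := Finset.univ), Finset.mul_sum]
    simp_rw [Finset.sum_comm (s := s) (t := Finset.univ)]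
    refine Finset.sum_congr rfl fun m _ => ?_
    rw [pair_sum_aux s (fun i => x i m) ((∑ i ∈ s, x i m) / s.card),
      mul_div_cancel₀ _ hN.ne']
    simp
  have e2 : ∑ i ∈ s, ∑ j ∈ s, ∑ a, (x i (emb a) - x j (emb a)) ^ 2 ≤
      2 * s.card * ∑ i ∈ s, ∑ a, (x i (emb a) - c a) ^ 2 := by
    rw [Finset.sum_comm (s := s) (t := Finset.univ), Finset.mul_sum]
    simp_rw [Finset.sum_comm (s := s) (t := Finset.univ)]
    refine Finset.sum_le_sum fun a _ => ?_
    rw [pair_sum_aux s (fun i => x i (emb a)) (c a)]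
    have := sq_nonneg (∑ i ∈ s, x i (emb a) - s.card * c a)
    linarith
  have e3 : ∑ i ∈ s, ∑ j ∈ s, ∑ m, (x i m - x j m) ^ 2 ≤
      τ * ∑ i ∈ s, ∑ j ∈ s, ∑ a, (x i (emb a) - x j (emb a)) ^ 2 := by
    simp_rw [Finset.mul_sum (s := s)]
    exact Finset.sum_le_sum fun i _ => Finset.sum_le_sum fun j _ => hproj i j
  have e4 := mul_le_mul_of_nonneg_left e2 hτ.le
  refine le_of_mul_le_mul_left (a := 2 * (s.card : ℝ)) ?_ (by positivity)
  rw [← e1]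
  linarith

/-- if one party's coordinates (the image of the injection `emb`) determine
pairwise squared distances up to factor `τ`, then the k-means cost of the full data with
the cluster centroids `μ_l` as centers is at most `τ` times the cost of assigning, within
each cluster `B_l`, the projected points to the arbitrary local centers `c_l`. -/
theorem local_partition_centroid_cost_bound (n d dt k : ℕ) (hk : 0 < k)
    (x : Fin n → Fin d → ℝ)
    (emb : Fin dt → Fin d) (hemb : Function.Injective emb)
    (τ : ℝ) (hτ : 0 < τ)
    (hproj : ∀ i j, (∑ m, (x i m - x j m) ^ 2) ≤ τ * ∑ a, (x i (emb a) - x j (emb a)) ^ 2)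
    (B : Fin k → Finset (Fin n))
    (hne : ∀ l, (B l).Nonempty)
    (hdisj : ∀ l l', l ≠ l' → Disjoint (B l) (B l'))
    (hcover : ∀ i, ∃ l, i ∈ B l)
    (c : Fin k → Fin dt → ℝ)
    (μ : Fin k → Fin d → ℝ)
    (hμ : ∀ l, μ l = fun m => (∑ i ∈ B l, x i m) / (B l).card) :
    ∑ i, ⨅ l, ∑ m, (x i m - μ l m) ^ 2 ≤
      τ * ∑ l, ∑ i ∈ B l, ∑ a, (x i (emb a) - c l a) ^ 2 := by
  have hu : (Finset.univ : Finset (Fin n)) = Finset.univ.biUnion B := by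
    ext i
    simpa using hcover i
  rw [hu, Finset.sum_biUnion (fun l _ l' _ h => hdisj l l' h), Finset.mul_sum]
  refine Finset.sum_le_sum fun l _ => ?_
  refine le_trans (Finset.sum_le_sum fun i _ => ciInf_le (Set.finite_range _).bddBelow l) ?_
  rw [hμ l]
  exact cluster_aux x emb τ hτ hproj (B l) (hne l) (c l)
end

section
/- Let x_1, …, x_n ∈ ℝ^d, let P : ℝ^d → ℝ^{d_t} be the projection onto a fixed subset of d_t coordinates, and let τ ≥ 1 satisfy ‖x_i − x_j‖₂² ≤ τ ‖P x_i − P x_j‖₂² for all i, j ∈ [n]. Let C̃^{(t)} = {c̃_1, …, c̃_k} ⊆ ℝ^{d_t} be a set of k centers that is an α-approximate solution (α ≥ 1) for k-means on the projected data {P x_1, …, P x_n}, i.e. Σ_i min_l ‖P x_i − c̃_l‖₂² ≤ α · Σ_i min_{c∈C'} ‖P x_i − c‖₂² for every set C' of k points in ℝ^{d_t}. For each i let π(i) ∈ argmin_l ‖P x_i − c̃_l‖₂, let B_l = {i : π(i) = l}, and for each nonempty B_l let μ_l = (1/|B_l|) Σ_{i∈B_l} x_i, setting C̃ = {μ_l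 : B_l ≠ ∅}. Then for every set C of k points in ℝ^d: cost(X, C̃) ≤ τ · Σ_i ‖P x_i − c̃_{π(i)}‖₂² ≤ α τ · cost(X, C). In particular C̃ is an ατ-approximate solution to k-means on the full data x_1, …, x_n. -/
lemma kmeans_pair_identity {ι : Type*} (s : Finset ι) (f : ι → ℝ) (c : ℝ) :
    ∑ i ∈ s, ∑ j ∈ s, (f i - f j) ^ 2
      = 2 * s.card * ∑ i ∈ s, (f i - c) ^ 2 - 2 * (∑ i ∈ s, (f i - c)) ^ 2 := by
  have h : ∀ i j, (f i - f j) ^ 2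
      = (f i - c) ^ 2 + (f j - c) ^ 2 - 2 * ((f i - c) * (f j - c)) := by
    intro i j; ring
  simp only [h, Finset.sum_sub_distrib (f := fun _ => _ + _), Finset.sum_add_distrib,
    Finset.sum_const, nsmul_eq_mul, ← Finset.mul_sum, ← Finset.sum_mul]
  ring

lemma kmeans_pair_swap {ι κ : Type*} [Fintype κ] (s : Finset ι) (f : ι → κ → ℝ) :
    ∑ i ∈ s, ∑ j ∈ s, ∑ m, (f i m - f j m) ^ 2
      = ∑ m, ∑ i ∈ s, ∑ j ∈ s, (f i m - f j m) ^ 2 := by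
  rw [Finset.sum_comm (s := Finset.univ)]
  refine Finset.sum_congr rfl fun i _ => ?_
  rw [Finset.sum_comm]

lemma kmeans_cluster {ι κ ν : Type*} [Fintype κ] [Fintype ν] (s : Finset ι) (hs : s.Nonempty)
    (f : ι → κ → ℝ) (g : ι → ν → ℝ) (τ : ℝ) (hτ : 1 ≤ τ)
    (h : ∀ i j, (∑ m, (f i m - f j m) ^ 2) ≤ τ * ∑ a, (g i a - g j a) ^ 2)
    (μ : κ → ℝ) (hμ : ∀ m, μ m = (∑ i ∈ s, f i m) / s.card) (c : ν → ℝ) :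
    ∑ i ∈ s, ∑ m, (f i m - μ m) ^ 2 ≤ τ * ∑ i ∈ s, ∑ a, (g i a - c a) ^ 2 := by
  have hc : (0 : ℝ) < s.card := by exact_mod_cast hs.card_pos
  have h1 : ∑ i ∈ s, ∑ j ∈ s, ∑ m, (f i m - f j m) ^ 2
      = 2 * s.card * ∑ i ∈ s, ∑ m, (f i m - μ m) ^ 2 := by
    rw [kmeans_pair_swap, Finset.sum_comm (s := s), Finset.mul_sum]
    refine Finset.sum_congr rfl fun m _ => ?_
    rw [kmeans_pair_identity s (fun i => f i m) (μ m)]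
    have : ∑ i ∈ s, (f i m - μ m) = 0 := by
      rw [Finset.sum_sub_distrib, Finset.sum_const, nsmul_eq_mul, hμ m]
      field_simp
      ring
    rw [this]; ring
  have h2 : ∑ i ∈ s, ∑ j ∈ s, ∑ a, (g i a - g j a) ^ 2
      ≤ 2 * s.card * ∑ i ∈ s, ∑ a, (g i a - c a) ^ 2 := by
    rw [kmeans_pair_swap, Finset.sum_comm (s := s), Finset.mul_sum]
    refine Finset.sum_le_sum fun a _ => ?_
    rw [kmeans_pair_identity s (fun i => g i a) (c a)]
    nlinarith [sq_nonneg (∑ i ∈ s, (g i a - c a))]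
  have h3 : ∑ i ∈ s, ∑ j ∈ s, ∑ m, (f i m - f j m) ^ 2
      ≤ τ * ∑ i ∈ s, ∑ j ∈ s, ∑ a, (g i a - g j a) ^ 2 := by
    simp only [Finset.mul_sum (a := τ) (s := s)]
    exact Finset.sum_le_sum fun i _ => Finset.sum_le_sum fun j _ => h i j
  have h4 := mul_le_mul_of_nonneg_left h2 (by linarith : (0 : ℝ) ≤ τ)
  have h5 : (2 * (s.card : ℝ)) * ∑ i ∈ s, ∑ m, (f i m - μ m) ^ 2
      ≤ (2 * s.card) * (τ * ∑ i ∈ s, ∑ a, (g i a - c a) ^ 2) := by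
    rw [← h1]; linarith
  exact le_of_mul_le_mul_left h5 (by linarith)

/-- a local `α`-approximate k-means solution `C̃^{(t)} = {c̃_l}` on the
projected data (projection `emb` onto one party's coordinates, satisfying the `τ`-distance
assumption) induces, via the centroids `μ_l` of the local clusters `B_l`, a global center
set `C̃ = {μ_l : B_l ≠ ∅}` with `cost(X, C̃) ≤ τ Σᵢ ‖Px_i − c̃_{π(i)}‖² ≤ ατ cost(X, C)`
for every set `C` of `k` centers. -/
theorem local_partition_induces_global_approximation (n d dt k : ℕ) (hn : 0 < n) (hk : 0 < k)
    (x : Fin n → Fin d → ℝ)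
    (emb : Fin dt → Fin d) (hemb : Function.Injective emb)
    (τ : ℝ) (hτ : 1 ≤ τ)
    (hproj : ∀ i j, (∑ m, (x i m - x j m) ^ 2) ≤ τ * ∑ a, (x i (emb a) - x j (emb a)) ^ 2)
    (α : ℝ) (hα : 1 ≤ α)
    (ctil : Fin k → Fin dt → ℝ)
    (happrox : ∀ C' : Fin k → Fin dt → ℝ,
      (∑ i, ⨅ l, ∑ a, (x i (emb a) - ctil l a) ^ 2) ≤
        α * ∑ i, ⨅ l, ∑ a, (x i (emb a) - C' l a) ^ 2)
    (π : Fin n → Fin k)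
    (hπ : ∀ i l, (∑ a, (x i (emb a) - ctil (π i) a) ^ 2) ≤
      ∑ a, (x i (emb a) - ctil l a) ^ 2)
    (B : Fin k → Finset (Fin n)) (hB : ∀ l, B l = Finset.univ.filter fun i => π i = l)
    (μ : Fin k → Fin d → ℝ)
    (hμ : ∀ l, (B l).Nonempty → μ l = fun m => (∑ i ∈ B l, x i m) / (B l).card) :
    ∀ C : Fin k → Fin d → ℝ,
      (∑ i, ⨅ l : {l : Fin k // (B l).Nonempty}, ∑ m, (x i m - μ l.1 m) ^ 2)
          ≤ τ * ∑ i, ∑ a, (x i (emb a) - ctil (π i) a) ^ 2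
      ∧ τ * (∑ i, ∑ a, (x i (emb a) - ctil (π i) a) ^ 2)
          ≤ α * τ * ∑ i, ⨅ l, ∑ m, (x i m - C l m) ^ 2 := by
  intro C
  have : Nonempty (Fin k) := ⟨⟨0, hk⟩⟩
  have hmem : ∀ i, (B (π i)).Nonempty := fun i => ⟨i, by simp [hB]⟩
  constructor
  · have h1 : (∑ i, ⨅ l : {l : Fin k // (B l).Nonempty}, ∑ m, (x i m - μ l.1 m) ^ 2)
        ≤ ∑ i, ∑ m, (x i m - μ (π i) m) ^ 2 := by
      refine Finset.sum_le_sum fun i _ => ?_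
      exact ciInf_le (Set.finite_range
        (fun l : {l : Fin k // (B l).Nonempty} => ∑ m, (x i m - μ l.1 m) ^ 2)).bddBelow
        ⟨π i, hmem i⟩
    refine h1.trans ?_
    rw [← Finset.sum_fiberwise Finset.univ π, ← Finset.sum_fiberwise Finset.univ π
      (fun i => ∑ a, (x i (emb a) - ctil (π i) a) ^ 2), Finset.mul_sum]
    refine Finset.sum_le_sum fun l _ => ?_
    rw [← hB l]
    rcases (B l).eq_empty_or_nonempty with he | hne
    · simp [he]
    · have hl : ∀ i ∈ B l, π i = l := by intro i hi; simpa [hB] using hi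
      have e1 : ∑ i ∈ B l, ∑ m, (x i m - μ (π i) m) ^ 2
          = ∑ i ∈ B l, ∑ m, (x i m - μ l m) ^ 2 :=
        Finset.sum_congr rfl fun i hi => by rw [hl i hi]
      have e2 : ∑ i ∈ B l, ∑ a, (x i (emb a) - ctil (π i) a) ^ 2
          = ∑ i ∈ B l, ∑ a, (x i (emb a) - ctil l a) ^ 2 :=
        Finset.sum_congr rfl fun i hi => by rw [hl i hi]
      rw [e1, e2]
      exact kmeans_cluster (B l) hne x (fun i a => x i (emb a)) τ hτ hproj (μ l)
        (fun m => by rw [hμ l hne]) (ctil l)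
  · have h1 : ∑ i, ∑ a, (x i (emb a) - ctil (π i) a) ^ 2
        ≤ ∑ i, ⨅ l, ∑ a, (x i (emb a) - ctil l a) ^ 2 :=
      Finset.sum_le_sum fun i _ => le_ciInf (hπ i)
    have h2 := happrox fun l a => C l (emb a)
    have h3 : ∑ i, ⨅ l, ∑ a, (x i (emb a) - C l (emb a)) ^ 2
        ≤ ∑ i, ⨅ l, ∑ m, (x i m - C l m) ^ 2 := by
      refine Finset.sum_le_sum fun i _ => ciInf_mono (Set.finite_range _).bddBelow fun l => ?_
      rw [← Finset.sum_image (s := Finset.univ) (g := emb) (f := fun m => (x i m - C l m) ^ 2)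
        (fun a _ b _ hab => hemb hab)]
      exact Finset.sum_le_sum_of_subset_of_nonneg (Finset.subset_univ _)
        fun m _ _ => sq_nonneg _
    have h4 := mul_le_mul_of_nonneg_left h3 (by linarith : (0 : ℝ) ≤ α)
    have h5 := mul_le_mul_of_nonneg_left (h1.trans (h2.trans h4)) (by linarith : (0 : ℝ) ≤ τ)
    refine h5.trans (le_of_eq (by ring))
end

section
/- Let x_1, …, x_n ∈ ℝ^d, let P : ℝ^d → ℝ^{d_t} be the projection onto a fixed subset of d_t coordinates, and let τ ≥ 1 satisfy ‖x_i − x_j‖₂² ≤ τ ‖P x_i − P x_j‖₂² for all i, j ∈ [n]. Let C̃^{(t)} = {c̃_1, …, c̃_k} ⊆ ℝ^{d_t} be an α-approximate solution (α ≥ 1, with ατ ≥ 1) for k-means on the projected data, i.e. Σ_i min_l ‖P x_i − c̃_l‖₂² ≤ α · Σ_i min_{c∈C'} ‖P x_i − c‖₂² for every set C' of k points in ℝ^{d_t}; assume L := Σ_i min_l ‖P x_i − c̃_l‖₂² > 0. For each i let π(i) ∈ argmin_l ‖P x_i − c̃_l‖₂ and B_l = {i : π(i) = l}. Then for every i ∈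 [n] and every set C of k points in ℝ^d with cost(X, C) > 0: d(x_i, C)² / cost(X, C) ≤ 4ατ · d(P x_i, C̃^{(t)})² / L + 4ατ · ( Σ_{j∈B_{π(i)}} d(P x_j, C̃^{(t)})² ) / ( |B_{π(i)}| · L ) + 8ατ / |B_{π(i)}|. -/
theorem sum_sq_sub_le_aux {ι : Type*} [Fintype ι] (u v w : ι → ℝ) :
    (∑ m, (u m - w m) ^ 2) ≤ 2 * (∑ m, (u m - v m) ^ 2) + 2 * ∑ m, (v m - w m) ^ 2 := by
  rw [Finset.mul_sum, Finset.mul_sum, ← Finset.sum_add_distrib]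
  refine Finset.sum_le_sum fun m _ => ?_
  nlinarith [sq_nonneg ((u m - v m) - (v m - w m))]

/-- upper bounding the global k-means sensitivity of point `i` by quantities
computable from the local data of one party: if the party's coordinates (image of `emb`)
determine squared distances up to factor `τ ≥ 1`, and `C̃^{(t)} = {c̃_l}` is a local
`α`-approximate solution with local cost `L > 0`, local clusters `B_l` given by the closest
center map `π`, then for every `k`-center set `C` with positive cost,
`d(x_i,C)²/cost(X,C) ≤ 4ατ d(Px_i,C̃^{(t)})²/L
  + 4ατ (Σ_{j∈B_{π(i)}} d(Px_j,C̃^{(t)})²)/(|B_{π(i)}| L) + 8ατ/|B_{π(i)}|`. -/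
theorem kmeans_sensitivity_local_bound (n d dt k : ℕ) (hn : 0 < n) (hk : 0 < k)
    (x : Fin n → Fin d → ℝ)
    (emb : Fin dt → Fin d) (hemb : Function.Injective emb)
    (τ : ℝ) (hτ : 1 ≤ τ)
    (hproj : ∀ i j, (∑ m, (x i m - x j m) ^ 2) ≤ τ * ∑ a, (x i (emb a) - x j (emb a)) ^ 2)
    (α : ℝ) (hα : 1 ≤ α) (hατ : 1 ≤ α * τ)
    (ctil : Fin k → Fin dt → ℝ)
    (happrox : ∀ C' : Fin k → Fin dt → ℝ,
      (∑ i, ⨅ l, ∑ a, (x i (emb a) - ctil l a) ^ 2) ≤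
        α * ∑ i, ⨅ l, ∑ a, (x i (emb a) - C' l a) ^ 2)
    (π : Fin n → Fin k)
    (hπ : ∀ i l, (∑ a, (x i (emb a) - ctil (π i) a) ^ 2) ≤
      ∑ a, (x i (emb a) - ctil l a) ^ 2)
    (B : Fin k → Finset (Fin n)) (hB : ∀ l, B l = Finset.univ.filter fun i => π i = l)
    (L : ℝ) (hL : L = ∑ i, ⨅ l, ∑ a, (x i (emb a) - ctil l a) ^ 2) (hLpos : 0 < L) :
    ∀ (i : Fin n) (C : Finset (Fin d → ℝ)) (hC : C.Nonempty), C.card = k →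
      0 < (∑ i', C.inf' hC fun c => ∑ m, (x i' m - c m) ^ 2) →
      (C.inf' hC fun c => ∑ m, (x i m - c m) ^ 2) /
          (∑ i', C.inf' hC fun c => ∑ m, (x i' m - c m) ^ 2) ≤
        4 * α * τ * (⨅ l, ∑ a, (x i (emb a) - ctil l a) ^ 2) / L
          + 4 * α * τ * (∑ j ∈ B (π i), ⨅ l, ∑ a, (x j (emb a) - ctil l a) ^ 2) /
              (((B (π i)).card : ℝ) * L)
          + 8 * α * τ / ((B (π i)).card : ℝ) := by
  intro i C hC hcard hpos
  have : Nonempty (Fin k) := ⟨⟨0, hk⟩⟩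
  have hinf : ∀ j, (⨅ l, ∑ a, (x j (emb a) - ctil l a) ^ 2)
      = ∑ a, (x j (emb a) - ctil (π j) a) ^ 2 := fun j =>
    le_antisymm (ciInf_le (Set.finite_range _).bddBelow (π j)) (le_ciInf (hπ j))
  have hDnn : ∀ j, 0 ≤ C.inf' hC fun c => ∑ m, (x j m - c m) ^ 2 := fun j =>
    Finset.le_inf' _ _ fun c _ => Finset.sum_nonneg fun m _ => sq_nonneg _
  have hcost : L ≤ α * ∑ i', C.inf' hC fun c => ∑ m, (x i' m - c m) ^ 2 := by
    let e := C.equivFinOfCardEq hcard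
    rw [hL]
    refine (happrox fun l a => (e.symm l : Fin d → ℝ) (emb a)).trans ?_
    refine mul_le_mul_of_nonneg_left (Finset.sum_le_sum fun j _ => ?_) (by linarith)
    refine Finset.le_inf' _ _ fun c hc => ?_
    refine (ciInf_le (Set.finite_range _).bddBelow (e ⟨c, hc⟩)).trans ?_
    simp only [Equiv.symm_apply_apply]
    rw [← Finset.sum_image (s := Finset.univ) (g := emb) (f := fun m => (x j m - c m) ^ 2)
      (fun a _ b _ h => hemb h)]
    exact Finset.sum_le_sum_of_subset_of_nonneg (Finset.subset_univ _)
      fun m _ _ => sq_nonneg _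
  have hstep : ∀ j ∈ B (π i), (C.inf' hC fun c => ∑ m, (x i m - c m) ^ 2) ≤
      4 * τ * (⨅ l, ∑ a, (x i (emb a) - ctil l a) ^ 2)
      + 4 * τ * (⨅ l, ∑ a, (x j (emb a) - ctil l a) ^ 2)
      + 2 * C.inf' hC fun c => ∑ m, (x j m - c m) ^ 2 := by
    intro j hj
    have hji : π j = π i := by simpa [hB] using hj
    obtain ⟨c, hc, hce⟩ := Finset.exists_mem_eq_inf' hC fun c => ∑ m, (x j m - c m) ^ 2
    rw [hce, hinf, hinf, hji]
    refine (Finset.inf'_le _ hc).trans ?_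
    have h1 := sum_sq_sub_le_aux (x i) (x j) c
    have h2 := sum_sq_sub_le_aux (fun a => x i (emb a)) (ctil (π i)) (fun a => x j (emb a))
    have h3 : (∑ a, (ctil (π i) a - x j (emb a)) ^ 2)
        = ∑ a, (x j (emb a) - ctil (π i) a) ^ 2 :=
      Finset.sum_congr rfl fun a _ => by ring
    rw [h3] at h2
    have h4 := mul_le_mul_of_nonneg_left h2 (by linarith : 0 ≤ τ)
    have h5 := hproj i j
    linarith
  have hsum := Finset.sum_le_sum hstep
  rw [Finset.sum_add_distrib, Finset.sum_add_distrib, ← Finset.mul_sum, ← Finset.mul_sum, ← Finset.mul_sum,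
    Finset.sum_const, Finset.sum_const, nsmul_eq_mul, nsmul_eq_mul] at hsum
  have hsub : (∑ j ∈ B (π i), C.inf' hC fun c => ∑ m, (x j m - c m) ^ 2) ≤
      ∑ i', C.inf' hC fun c => ∑ m, (x i' m - c m) ^ 2 :=
    Finset.sum_le_sum_of_subset_of_nonneg (Finset.subset_univ _) fun m _ _ => hDnn m
  have hb : (0 : ℝ) < ((B (π i)).card : ℝ) := by
    exact_mod_cast Finset.card_pos.2 ⟨i, by simp [hB]⟩
  have hdi : 0 ≤ ⨅ l, ∑ a, (x i (emb a) - ctil l a) ^ 2 := by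
    rw [hinf]; exact Finset.sum_nonneg fun _ _ => sq_nonneg _
  have hS : 0 ≤ ∑ j ∈ B (π i), ⨅ l, ∑ a, (x j (emb a) - ctil l a) ^ 2 :=
    Finset.sum_nonneg fun j _ => by
      rw [hinf]; exact Finset.sum_nonneg fun _ _ => sq_nonneg _
  clear hL
  generalize (∑ j ∈ B (π i), ⨅ l, ∑ a, (x j (emb a) - ctil l a) ^ 2) = S at *
  generalize (⨅ l, ∑ a, (x i (emb a) - ctil l a) ^ 2) = di at *
  generalize (∑ j ∈ B (π i), C.inf' hC fun c => ∑ m, (x j m - c m) ^ 2) = T at *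
  generalize (∑ i', C.inf' hC fun c => ∑ m, (x i' m - c m) ^ 2) = K at *
  generalize (C.inf' hC fun c => ∑ m, (x i m - c m) ^ 2) = D at *
  generalize ((B (π i)).card : ℝ) = b at *
  have e : 4 * α * τ * di / L + 4 * α * τ * S / (b * L) + 8 * α * τ / b
      = (4 * τ * (b * di + S) * (α / L) + 8 * (α * τ)) / b := by
    field_simp
  rw [e, div_le_div_iff₀ hpos hb]
  have hK : 1 ≤ α / L * K := by
    rw [div_mul_eq_mul_div, le_div_iff₀ hLpos]; linarith
  have hnn : 0 ≤ 4 * τ * (b * di + S) := by positivity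
  have h6 := mul_le_mul_of_nonneg_left hK hnn
  have h7 := mul_le_mul_of_nonneg_right hατ hpos.le
  nlinarith
end
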